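/- For every τ ∈ ℍ and every z ∈ ℂ with z ∉ Λ_τ, the logarithmic τ-derivative of the Weierstrass sigma function satisfies ∂/∂τ log σ(z|τ) = (i/(4π))[℘(z|τ) − ζ(z|τ)² + 2η₁(τ)(zζ(z|τ) − 1) − (1/12)g₂(τ)z²]. -/

import Mathlib

open Complex Filter Topology Asymptotics

noncomputable section

/-- membership in the lattice `Λ_τ = ℤ + τℤ`. -/
def InLattice (τ z : ℂ) : Prop := ∃ m n : ℤ, z = (m : ℂ) + (n : ℂ) * τ

/-- the half-period generators `ω₀ = 0, ω₁ = 1, ω₂ = τ, ω₃ = 1 + τ`. -/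
def halfp (τ : ℂ) : Fin 4 → ℂ := ![0, 1, τ, 1 + τ]

/-- the Weierstrass elliptic function `℘(z|τ)`. -/
def wp (τ z : ℂ) : ℂ :=
  z⁻¹ ^ 2 + ∑' w : {w : ℤ × ℤ // w ≠ 0},
    ((z - ((w.1.1 : ℂ) + (w.1.2 : ℂ) * τ))⁻¹ ^ 2 - ((w.1.1 : ℂ) + (w.1.2 : ℂ) * τ)⁻¹ ^ 2)

/-- `℘′(z|τ)`, the `z`-derivative of `℘`. -/
def wpd (τ z : ℂ) : ℂ := deriv (wp τ) z

/-- `℘″(z|τ)`. -/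
def wpdd (τ z : ℂ) : ℂ := deriv (wpd τ) z

def e1 (τ : ℂ) : ℂ := wp τ (1 / 2)
def e2 (τ : ℂ) : ℂ := wp τ (τ / 2)
def e3 (τ : ℂ) : ℂ := wp τ ((1 + τ) / 2)

def g2 (τ : ℂ) : ℂ := -4 * (e1 τ * e2 τ + e1 τ * e3 τ + e2 τ * e3 τ)

/-- `zeta` is the Weierstrass zeta function: for each `τ ∈ ℍ`, `zeta τ` is odd, satisfies
`∂ζ/∂z = -℘` off the lattice, and `ζ(z|τ) - 1/z → 0` as `z → 0`. -/
def IsWeierstrassZeta (zeta : ℂ → ℂ → ℂ) : Prop :=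
  ∀ τ : ℂ, 0 < τ.im →
    (∀ z : ℂ, zeta τ (-z) = - zeta τ z) ∧
    (∀ z : ℂ, ¬ InLattice τ z → HasDerivAt (zeta τ) (- wp τ z) z) ∧
    Tendsto (fun z => zeta τ z - z⁻¹) (𝓝[≠] (0 : ℂ)) (𝓝 0)

/-- `eta1 τ = ζ(z+1|τ) - ζ(z|τ)` is the first quasi-period. -/
def IsEta1 (zeta : ℂ → ℂ → ℂ) (eta1 : ℂ → ℂ) : Prop :=
  ∀ τ : ℂ, 0 < τ.im → ∀ z : ℂ, ¬ InLattice τ z →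
    eta1 τ = zeta τ (z + 1) - zeta τ z

/-- `eta2 τ = ζ(z+τ|τ) - ζ(z|τ)` is the second quasi-period. -/
def IsEta2 (zeta : ℂ → ℂ → ℂ) (eta2 : ℂ → ℂ) : Prop :=
  ∀ τ : ℂ, 0 < τ.im → ∀ z : ℂ, ¬ InLattice τ z →
    eta2 τ = zeta τ (z + τ) - zeta τ z

/-- `sigma` is the Weierstrass sigma function: entire, odd, with
`∂/∂z log σ = ζ` off the lattice and `σ(z|τ)/z → 1` as `z → 0`. -/
def IsWeierstrassSigma (zeta sigma : ℂ → ℂ → ℂ) : Prop :=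
  ∀ τ : ℂ, 0 < τ.im →
    (∀ z : ℂ, sigma τ (-z) = - sigma τ z) ∧
    Differentiable ℂ (sigma τ) ∧
    (∀ z : ℂ, ¬ InLattice τ z → HasDerivAt (sigma τ) (zeta τ z * sigma τ z) z) ∧
    Tendsto (fun z => sigma τ z / z) (𝓝[≠] (0 : ℂ)) (𝓝 1)

/-- the Hamiltonian system (142) for `(p(τ), A(τ))` on `V`. -/
def HamSystem (n : Fin 4 → ℂ) (zeta : ℂ → ℂ → ℂ) (eta1 : ℂ → ℂ)
    (V : Set ℂ) (p A : ℂ → ℂ) : Prop :=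
  ∀ τ ∈ V,
    HasDerivAt p ((-Complex.I / (4 * (Real.pi : ℂ))) *
      (2 * A τ - zeta τ (2 * p τ) + 2 * p τ * eta1 τ)) τ ∧
    HasDerivAt A ((Complex.I / (4 * (Real.pi : ℂ))) *
      ((2 * wp τ (2 * p τ) + 2 * eta1 τ) * A τ - (3 / 2) * wpd τ (2 * p τ)
        - ∑ k : Fin 4, n k * (n k + 1) * wpd τ (p τ + halfp τ k / 2))) τ

/-- the generalized Lamé potential `I(z;τ)`. -/
def Ipot (n : Fin 4 → ℂ) (zeta : ℂ → ℂ → ℂ) (A B p τ z : ℂ) : ℂ :=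
  (∑ k : Fin 4, n k * (n k + 1) * wp τ (z + halfp τ k / 2))
    + (3 / 4) * (wp τ (z + p) + wp τ (z - p))
    + A * (zeta τ (z + p) - zeta τ (z - p)) + B

end

open scoped Real

noncomputable section

/-- The `n`-th frequency `2πi(n + 1/2)` of the odd Jacobi theta function. -/
def thetaFreq (n : ℤ) : ℂ := 2 * π * I * (n + 1 / 2)

/-- The `n`-th summand of the `k`-th `z`-derivative of the odd Jacobi theta function. -/
def oddThetaTerm (k : ℕ) (n : ℤ) (z τ : ℂ) : ℂ :=
  thetaFreq n ^ k * cexp (π * I * n + π * I * (n + 1 / 2) ^ 2 * τ + thetaFreq n * z)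

/-- The `k`-th `z`-derivative of the odd Jacobi theta function
`∑ (-1)ⁿ exp(πi(n + 1/2)²τ + 2πi(n + 1/2)z)`. -/
def oddTheta (k : ℕ) (z τ : ℂ) : ℂ := ∑' n : ℤ, oddThetaTerm k n z τ

/-- A summable majorant of the summands of `oddTheta`, uniform for `|Im z| ≤ S` and `T ≤ Im τ`. -/
def oddThetaBound (k : ℕ) (S T : ℝ) (n : ℤ) : ℝ :=
  k.factorial * rexp (π * (S + 1)) *
    ((|n| ^ 0 : ℝ) * rexp (-π * (T * n ^ 2 - 2 * (S + 1 + T / 2) * |n|)))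

lemma summable_oddThetaBound (k : ℕ) (S : ℝ) {T : ℝ} (hT : 0 < T) :
    Summable (oddThetaBound k S T) :=
  (summable_pow_mul_jacobiTheta₂_term_bound (S + 1 + T / 2) hT 0).mul_left _

lemma norm_oddThetaTerm_le (k : ℕ) {S T : ℝ} (hT : 0 < T) {z τ : ℂ} (hz : |z.im| ≤ S)
    (hτ : T ≤ τ.im) (n : ℤ) : ‖oddThetaTerm k n z τ‖ ≤ oddThetaBound k S T n := by
  have hS : 0 ≤ S := (abs_nonneg _).trans hz
  have hfreq : thetaFreq n = ((2 * π * (n + 1 / 2) : ℝ) : ℂ) * I := by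
    simp only [thetaFreq]; push_cast; ring
  have hn : ‖thetaFreq n‖ = 2 * π * |(n : ℝ) + 1 / 2| := by
    rw [hfreq, norm_mul, norm_real, norm_I, mul_one, Real.norm_eq_abs, abs_mul,
      abs_of_pos Real.two_pi_pos]
  have hre : (π * I * n + π * I * (n + 1 / 2) ^ 2 * τ + thetaFreq n * z).re
      = -π * ((n : ℝ) + 1 / 2) ^ 2 * τ.im - 2 * π * ((n : ℝ) + 1 / 2) * z.im := by
    have : (π * I * n + π * I * (n + 1 / 2) ^ 2 * τ + thetaFreq n * z)
      = ((π * n : ℝ) : ℂ) * I + ((π * (n + 1 / 2) ^ 2 : ℝ) : ℂ) * (τ * I)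
        + ((2 * π * (n + 1 / 2) : ℝ) : ℂ) * (z * I) := by
      rw [hfreq]; push_cast; ring
    rw [this, add_re, add_re, re_ofReal_mul, re_ofReal_mul, re_ofReal_mul, mul_I_re, mul_I_re, I_re]
    ring
  rw [oddThetaTerm, norm_mul, norm_pow, hn, norm_exp, hre]
  set a : ℝ := (n : ℝ) + 1 / 2 with ha
  have h1 : (2 * π * |a|) ^ k ≤ k.factorial * rexp (2 * π * |a|) := by
    have := Real.pow_div_factorial_le_exp (2 * π * |a|) (by positivity) k
    rwa [div_le_iff₀ (by positivity), mul_comm (rexp _)] at this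
  have hpi := Real.pi_pos
  have h2 : -π * a ^ 2 * τ.im - 2 * π * a * z.im ≤ -π * a ^ 2 * T + 2 * π * |a| * S := by
    have e1 : a ^ 2 * T ≤ a ^ 2 * τ.im := by gcongr
    have e2 : -(a * z.im) ≤ |a| * S :=
      (neg_le_abs _).trans (by rw [abs_mul]; gcongr)
    nlinarith
  have habs : |a| ≤ |(n : ℝ)| + 1 / 2 := by
    refine (abs_add_le _ _).trans (by norm_num)
  have hsq : (n : ℝ) ^ 2 - |(n : ℝ)| ≤ a ^ 2 := by
    have := neg_abs_le (n : ℝ)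
    rw [ha]; nlinarith
  have h3 : 2 * π * |a| + (-π * a ^ 2 * T + 2 * π * |a| * S)
      ≤ π * (S + 1) + -π * (T * n ^ 2 - 2 * (S + 1 + T / 2) * |(n : ℝ)|) := by
    have e1 : ((n : ℝ) ^ 2 - |(n : ℝ)|) * T ≤ a ^ 2 * T := by gcongr
    have e2 : |a| * (S + 1) ≤ (|(n : ℝ)| + 1 / 2) * (S + 1) := by gcongr
    nlinarith
  calc _ ≤ (k.factorial * rexp (2 * π * |a|)) * rexp (-π * a ^ 2 * T + 2 * π * |a| * S) := by
        gcongr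
    _ = k.factorial * rexp (2 * π * |a| + (-π * a ^ 2 * T + 2 * π * |a| * S)) := by
        rw [Real.exp_add (2 * π * |a|)]; ring
    _ ≤ k.factorial * rexp (π * (S + 1) + -π * (T * n ^ 2 - 2 * (S + 1 + T / 2) * |(n : ℝ)|)) := by
        gcongr
    _ = _ := by rw [Real.exp_add, oddThetaBound, pow_zero]; push_cast; ring

lemma summable_oddThetaTerm (k : ℕ) (z : ℂ) {τ : ℂ} (hτ : 0 < τ.im) :
    Summable fun n => oddThetaTerm k n z τ :=
  (summable_oddThetaBound k |z.im| hτ).of_norm_bounded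
    (norm_oddThetaTerm_le k hτ le_rfl le_rfl)

lemma isPreconnected_im_preimage {s : Set ℝ} (hs : Convex ℝ s) :
    IsPreconnected {z : ℂ | z.im ∈ s} :=
  (hs.linear_preimage imLm).isPreconnected

lemma hasDerivAt_oddTheta_fst (k : ℕ) (z : ℂ) {τ : ℂ} (hτ : 0 < τ.im) :
    HasDerivAt (fun w => oddTheta k w τ) (oddTheta (k + 1) z τ) z := by
  obtain ⟨S, hS⟩ := exists_gt |z.im|
  refine hasDerivAt_tsum_of_isPreconnected (t := {w : ℂ | w.im ∈ Set.Ioo (-S) S})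
    (g := fun n w => oddThetaTerm k n w τ) (g' := fun n w => oddThetaTerm (k + 1) n w τ)
    (summable_oddThetaBound (k + 1) S hτ) (isOpen_Ioo.preimage continuous_im)
    (isPreconnected_im_preimage (convex_Ioo _ _)) (fun n w _ => ?_) (fun n w hw => ?_)
    (abs_lt.mp hS) (summable_oddThetaTerm k z hτ) (abs_lt.mp hS)
  · have h : HasDerivAt (fun w => π * I * n + π * I * (n + 1 / 2) ^ 2 * τ + thetaFreq n * w)
        (thetaFreq n) w := by
      simpa using ((hasDerivAt_id w).const_mul (thetaFreq n)).const_add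
        (π * I * n + π * I * (n + 1 / 2) ^ 2 * τ)
    convert! h.cexp.const_mul (thetaFreq n ^ k) using 1
    rw [oddThetaTerm]; ring
  · exact norm_oddThetaTerm_le (k + 1) hτ (abs_lt.mpr hw).le le_rfl n

/-- The heat equation for the odd theta function and its `z`-derivatives. -/
lemma hasDerivAt_oddTheta_snd (k : ℕ) (z : ℂ) {τ : ℂ} (hτ : 0 < τ.im) :
    HasDerivAt (fun t => oddTheta k z t) (oddTheta (k + 2) z τ / (4 * π * I)) τ := by
  obtain ⟨T, hT, hTτ⟩ := exists_between hτ
  have hpi : (4 * π * I : ℂ) ≠ 0 := by simp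
  rw [oddTheta, ← tsum_div_const]
  refine hasDerivAt_tsum_of_isPreconnected (t := {w : ℂ | w.im ∈ Set.Ioi T})
    (g := fun n w => oddThetaTerm k n z w)
    (g' := fun n w => oddThetaTerm (k + 2) n z w / (4 * π * I))
    ((summable_oddThetaBound (k + 2) |z.im| hT).div_const ‖(4 * π * I : ℂ)‖)
    (isOpen_Ioi.preimage continuous_im)
    (isPreconnected_im_preimage (convex_Ioi _)) (fun n w _ => ?_) (fun n w hw => ?_)
    hTτ (summable_oddThetaTerm k z hτ) hTτ
  · have h : HasDerivAt (fun w => π * I * n + π * I * (n + 1 / 2) ^ 2 * w + thetaFreq n * z)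
        (π * I * (n + 1 / 2) ^ 2) w := by
      simpa using (((hasDerivAt_id w).const_mul (π * I * (n + 1 / 2 : ℂ) ^ 2)).const_add
        (π * I * n : ℂ)).add_const (thetaFreq n * z)
    convert! h.cexp.const_mul (thetaFreq n ^ k) using 1
    have : thetaFreq n ^ 2 = (4 * π * I) * (π * I * (n + 1 / 2) ^ 2) := by
      rw [thetaFreq]; ring
    rw [oddThetaTerm, div_eq_iff hpi, pow_add, this]; ring
  · rw [norm_div]
    gcongr
    exact norm_oddThetaTerm_le (k + 2) hT le_rfl (le_of_lt hw) n

lemma differentiable_oddTheta (k : ℕ) {τ : ℂ} (hτ : 0 < τ.im) :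
    Differentiable ℂ fun z => oddTheta k z τ :=
  fun z => (hasDerivAt_oddTheta_fst k z hτ).differentiableAt

lemma iteratedDeriv_oddTheta (k n : ℕ) {τ : ℂ} (hτ : 0 < τ.im) :
    iteratedDeriv n (fun z => oddTheta k z τ) = fun z => oddTheta (k + n) z τ := by
  induction n with
  | zero => simp
  | succ n ih =>
    rw [iteratedDeriv_succ, ih]
    exact funext fun z => (hasDerivAt_oddTheta_fst _ z hτ).deriv

lemma oddTheta_neg (k : ℕ) (z τ : ℂ) :
    oddTheta k (-z) τ = (-1) ^ (k + 1) * oddTheta k z τ := by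
  rw [oddTheta, oddTheta, ← tsum_mul_left, ← (Equiv.subLeft (-1 : ℤ)).tsum_eq]
  refine tsum_congr fun n => ?_
  have hf : thetaFreq (-1 - n) = - thetaFreq n := by simp only [thetaFreq]; push_cast; ring
  have he : cexp (π * I * ((-1 - n : ℤ) : ℂ)
      + π * I * (((-1 - n : ℤ) : ℂ) + 1 / 2) ^ 2 * τ + - thetaFreq n * -z)
      = - cexp (π * I * n + π * I * (n + 1 / 2) ^ 2 * τ + thetaFreq n * z) := by
    have : (π * I * ((-1 - n : ℤ) : ℂ)
      + π * I * (((-1 - n : ℤ) : ℂ) + 1 / 2) ^ 2 * τ + - thetaFreq n * -z)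
      = (π * I * n + π * I * (n + 1 / 2) ^ 2 * τ + thetaFreq n * z) + π * I
        + ((-1 - n : ℤ) : ℂ) * (2 * π * I) := by push_cast; ring
    rw [this, exp_add, exp_int_mul_two_pi_mul_I, exp_add, exp_pi_mul_I]; ring
  rw [Equiv.subLeft_apply, oddThetaTerm, oddThetaTerm, hf, he, neg_pow]
  ring

lemma oddTheta_zero_of_even {k : ℕ} (hk : Even k) (τ : ℂ) : oddTheta k 0 τ = 0 := by
  have h := oddTheta_neg k 0 τ
  rw [neg_zero, pow_succ, hk.neg_one_pow, one_mul, neg_one_mul] at h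
  exact CharZero.eq_neg_self_iff.mp h

lemma oddTheta_add_one (z τ : ℂ) : oddTheta 0 (z + 1) τ = - oddTheta 0 z τ := by
  rw [oddTheta, oddTheta, ← tsum_neg]
  refine tsum_congr fun n => ?_
  have : (π * I * n + π * I * (n + 1 / 2) ^ 2 * τ + thetaFreq n * (z + 1))
      = (π * I * n + π * I * (n + 1 / 2) ^ 2 * τ + thetaFreq n * z) + π * I
        + n * (2 * π * I) := by rw [thetaFreq]; ring
  rw [oddThetaTerm, oddThetaTerm, this, exp_add, exp_int_mul_two_pi_mul_I, exp_add, exp_pi_mul_I]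
  ring

lemma oddTheta_add_tau (z τ : ℂ) :
    oddTheta 0 (z + τ) τ = - cexp (-(2 * π * I) * (z + τ / 2)) * oddTheta 0 z τ := by
  rw [oddTheta, oddTheta, ← tsum_mul_left]
  conv_rhs => rw [← (Equiv.addRight (1 : ℤ)).tsum_eq]
  refine tsum_congr fun n => ?_
  have : (π * I * n + π * I * (n + 1 / 2) ^ 2 * τ + thetaFreq n * (z + τ))
      = -(2 * π * I) * (z + τ / 2) + (π * I * ((n + 1 : ℤ) : ℂ)
        + π * I * (((n + 1 : ℤ) : ℂ) + 1 / 2) ^ 2 * τ + thetaFreq (n + 1) * z) + π * I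
        + ((-1 : ℤ) : ℂ) * (2 * π * I) := by simp only [thetaFreq]; push_cast; ring
  rw [Equiv.coe_addRight, oddThetaTerm, oddThetaTerm, this, exp_add, exp_int_mul_two_pi_mul_I,
    exp_add, exp_pi_mul_I, exp_add]
  ring

lemma exists_oddTheta_ne_zero {τ : ℂ} (hτ : 0 < τ.im) : ∃ z, oddTheta 0 z τ ≠ 0 := by
  by_contra! h
  have hper (n : ℤ) (x : ℝ) : oddThetaTerm 0 n x τ * cexp (-(π * I) * x)
      = cexp (π * I * n + π * I * (n + 1 / 2) ^ 2 * τ) * cexp ((n * (2 * π * I)) * x) := by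
    rw [oddThetaTerm, pow_zero, one_mul, ← exp_add, ← exp_add, thetaFreq]
    congr 1; ring
  have hsum := intervalIntegral.hasSum_intervalIntegral_of_summable_norm (a := 0) (b := 1)
    (f := fun n : ℤ => (⟨fun x : ℝ => oddThetaTerm 0 n x τ * cexp (-(π * I) * x), by
      unfold oddThetaTerm; fun_prop⟩ : C(ℝ, ℂ))) <| by
    refine Summable.of_nonneg_of_le (fun _ => norm_nonneg _) (fun n => ?_)
      (summable_oddThetaBound 0 0 hτ)
    rw [ContinuousMap.norm_le _ (by unfold oddThetaBound; positivity)]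
    rintro ⟨x, hx⟩
    have h1 : ‖cexp (-(π * I) * x)‖ = 1 := by
      rw [show -(π * I) * x = ((-(π * x) : ℝ) : ℂ) * I by push_cast; ring, norm_exp_ofReal_mul_I]
    rw [neg_mul] at h1
    simpa [h1] using norm_oddThetaTerm_le 0 hτ (z := x) (S := 0) (by simp) le_rfl n
  have hint (n : ℤ) (hn : n ≠ 0) :
      ∫ x in (0 : ℝ)..1, oddThetaTerm 0 n x τ * cexp (-(π * I) * x) = 0 := by
    simp_rw [hper]
    rw [intervalIntegral.integral_const_mul, integral_exp_mul_complex (by simp [hn])]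
    simp [exp_int_mul_two_pi_mul_I]
  have hzero : ∀ x : ℝ, ∑' n : ℤ, oddThetaTerm 0 n x τ * cexp (-(π * I) * x) = 0 := fun x => by
    rw [tsum_mul_right, ← oddTheta, h, zero_mul]
  simp only [ContinuousMap.coe_mk, hzero, intervalIntegral.integral_zero] at hsum
  have h0 := hsum.unique (hasSum_single 0 hint)
  simp_rw [hper] at h0
  simp only [Int.cast_zero, zero_mul, exp_zero, mul_one] at h0
  simp [eq_comm (a := (0 : ℂ))] at h0

end

/-- If every zero of `s` is simple and is a zero of `g`, then `g / s` extends to an entire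
function. -/
lemma exists_differentiable_mul_eq {g s : ℂ → ℂ} (hg : Differentiable ℂ g)
    (hs : Differentiable ℂ s) (hsimple : ∀ a, s a = 0 → deriv s a ≠ 0)
    (hzero : ∀ a, s a = 0 → g a = 0) :
    ∃ f : ℂ → ℂ, Differentiable ℂ f ∧ ∀ z, g z = f z * s z := by
  classical
  refine ⟨fun z => if s z = 0 then deriv g z / deriv s z else g z / s z, fun a => ?_, fun z => ?_⟩
  · by_cases ha : s a = 0
    · have hdg : DifferentiableAt ℂ (dslope g a) a :=
        ((differentiableOn_dslope univ_mem).mpr hg.differentiableOn).differentiableAt univ_mem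
      have hds : DifferentiableAt ℂ (dslope s a) a :=
        ((differentiableOn_dslope univ_mem).mpr hs.differentiableOn).differentiableAt univ_mem
      have hne : dslope s a a ≠ 0 := by rw [dslope_same]; exact hsimple a ha
      refine (hdg.div hds hne).congr_of_eventuallyEq ?_
      filter_upwards [hds.continuousAt.eventually_ne hne] with z hz
      rcases eq_or_ne z a with rfl | hza
      · simp [ha]
      · have hsz : s z = (z - a) * dslope s a z := by
          rw [dslope_of_ne _ hza, ← smul_eq_mul, sub_smul_slope, vsub_eq_sub, ha, sub_zero]
        have hgz : g z = (z - a) * dslope g a z := by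
          rw [dslope_of_ne _ hza, ← smul_eq_mul, sub_smul_slope, vsub_eq_sub, hzero a ha, sub_zero]
        have hza' := sub_ne_zero.mpr hza
        have : s z ≠ 0 := by rw [hsz]; exact mul_ne_zero hza' hz
        rw [if_neg this, hgz, hsz, Pi.div_apply, mul_div_mul_left _ _ hza']
    · refine ((hg a).div (hs a) ha).congr_of_eventuallyEq ?_
      filter_upwards [(hs a).continuousAt.eventually_ne ha] with z hz
      rw [if_neg hz, Pi.div_apply]
  · by_cases hz : s z = 0
    · rw [hz, hzero z hz, mul_zero]
    · simp only [hz, if_false]; field_simp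

namespace PeriodPair

variable (L : PeriodPair)

lemma countable_lattice : (L.lattice : Set ℂ).Countable := by
  have : Countable L.lattice := L.latticeEquivProd.toEquiv.countable_iff.mpr inferInstance
  exact this

lemma isPreconnected_compl_lattice : IsPreconnected ((L.lattice : Set ℂ)ᶜ) :=
  (L.countable_lattice.isConnected_compl_of_one_lt_rank (by simp)).isPreconnected

lemma isOpen_compl_lattice : IsOpen ((L.lattice : Set ℂ)ᶜ) := L.isClosed_lattice.isOpen_compl

lemma dense_compl_lattice : Dense ((L.lattice : Set ℂ)ᶜ) := L.countable_lattice.dense_compl ℝ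

lemma eq_of_eq_off_lattice {f g : ℂ → ℂ} (hf : Continuous f) (hg : Continuous g)
    (h : ∀ z ∉ L.lattice, f z = g z) (z : ℂ) : f z = g z :=
  congrFun (hf.ext_on L.dense_compl_lattice hg h) z

/-- A function with zero derivative off the lattice is constant there. -/
lemma eq_of_hasDerivAt_zero {f : ℂ → ℂ} (h : ∀ z ∉ L.lattice, HasDerivAt f 0 z)
    {z w : ℂ} (hz : z ∉ L.lattice) (hw : w ∉ L.lattice) : f z = f w :=
  L.isOpen_compl_lattice.is_const_of_deriv_eq_zero L.isPreconnected_compl_lattice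
    (fun x hx => (h x hx).differentiableAt.differentiableWithinAt)
    (fun x hx => (h x hx).deriv) hz hw

lemma add_mem_iff {z l : ℂ} (hl : l ∈ L.lattice) : z + l ∈ L.lattice ↔ z ∈ L.lattice :=
  add_mem_cancel_right hl

/-- An entire function that is dominated by a continuous doubly periodic function is constant. -/
lemma entire_const_of_norm_le_periodic {f : ℂ → ℂ} (hf : Differentiable ℂ f) {φ : ℂ → ℝ}
    (hφ : Continuous φ) (hφ₁ : ∀ z, φ (z + L.ω₁) = φ z) (hφ₂ : ∀ z, φ (z + L.ω₂) = φ z)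
    (hle : ∀ z, ‖f z‖ ≤ φ z) (z w : ℂ) : f z = f w := by
  have hper : ∀ z w, w ∈ L.lattice → φ (z + w) = φ z := by
    intro z w hw
    obtain ⟨m, n, rfl⟩ := PeriodPair.mem_lattice.mp hw
    have h₁ : Function.Periodic φ (m * L.ω₁) := Function.Periodic.int_mul (c := L.ω₁) hφ₁ m
    have h₂ : Function.Periodic φ (n * L.ω₂) := Function.Periodic.int_mul (c := L.ω₂) hφ₂ n
    rw [← add_assoc, h₂, h₁]
  obtain ⟨M, hM⟩ := (IsZLattice.isCompact_range_of_periodic L.lattice φ hφ hper).bddAbove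
  refine hf.apply_eq_apply_of_bounded (isBounded_iff_forall_norm_le.mpr ⟨M, ?_⟩) z w
  rintro _ ⟨x, rfl⟩
  exact (hle x).trans (hM ⟨x, rfl⟩)

end PeriodPair

namespace PeriodPair

/-- `ζ` and `σ` are a Weierstrass zeta function (up to an additive constant) and the Weierstrass
sigma function of the lattice spanned by `L`. -/
structure IsSigma (L : PeriodPair) (ζ σ : ℂ → ℂ) : Prop where
  hasDerivAt_zeta : ∀ z ∉ L.lattice, HasDerivAt ζ (-L.weierstrassP z) z
  odd : ∀ z, σ (-z) = -σ z
  differentiable : Differentiable ℂ σ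
  hasDerivAt : ∀ z ∉ L.lattice, HasDerivAt σ (ζ z * σ z) z
  tendsto : Tendsto (fun z => σ z / z) (𝓝[≠] (0 : ℂ)) (𝓝 1)

namespace IsSigma

variable {L : PeriodPair} {ζ σ : ℂ → ℂ} (h : L.IsSigma ζ σ)
include h

lemma zero : σ 0 = 0 := by
  have := h.odd 0
  rw [neg_zero] at this
  exact CharZero.eq_neg_self_iff.mp this

lemma hasDerivAt_zero : HasDerivAt σ 1 0 := by
  rw [hasDerivAt_iff_tendsto_slope]
  refine h.tendsto.congr fun z => ?_
  rw [slope_def_field, h.zero, sub_zero, sub_zero]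

lemma ne_zero {z : ℂ} (hz : z ∉ L.lattice) : σ z ≠ 0 := by
  intro h0
  obtain ⟨r, hr, hball⟩ := Metric.isOpen_iff.mp L.isOpen_compl_lattice z hz
  have hζ : DifferentiableOn ℂ ζ (Metric.ball z r) := fun w hw =>
    (h.hasDerivAt_zeta w (hball hw)).differentiableAt.differentiableWithinAt
  obtain ⟨Z, hZ⟩ := hζ.isExactOn_ball
  have hderiv : ∀ w ∈ Metric.ball z r, HasDerivAt (fun w => σ w * cexp (-Z w)) 0 w := by
    intro w hw
    convert! (h.hasDerivAt w (hball hw)).mul (hZ w hw).neg.cexp using 1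
    ring
  have hconst : ∀ w ∈ Metric.ball z r, σ w = 0 := by
    intro w hw
    have := Metric.isOpen_ball.is_const_of_deriv_eq_zero (convex_ball z r).isPreconnected
      (fun x hx => (hderiv x hx).differentiableAt.differentiableWithinAt)
      (fun x hx => (hderiv x hx).deriv) hw (Metric.mem_ball_self hr)
    simpa [h0, exp_ne_zero] using this
  have hzero : σ = 0 := by
    have hσ : AnalyticOnNhd ℂ σ Set.univ := fun x _ => h.differentiable.analyticAt x
    exact hσ.eq_of_eventuallyEq (z₀ := z) (fun x _ => analyticAt_const)
      (Filter.eventually_of_mem (Metric.ball_mem_nhds z hr) hconst)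
  have := h.hasDerivAt_zero
  rw [hzero] at this
  exact one_ne_zero (this.unique (hasDerivAt_const 0 (0 : ℂ)))

lemma exists_zeta_add {l : ℂ} (hl : l ∈ L.lattice) :
    ∃ η : ℂ, ∀ z ∉ L.lattice, ζ (z + l) = ζ z + η := by
  have hw := L.ω₁_div_two_notMem_lattice
  refine ⟨ζ (L.ω₁ / 2 + l) - ζ (L.ω₁ / 2), fun z hz => ?_⟩
  have : ∀ z ∉ L.lattice, HasDerivAt (fun z => ζ (z + l) - ζ z) 0 z := by
    intro z hz
    have h1 := h.hasDerivAt_zeta (z + l) (by rwa [L.add_mem_iff hl])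
    convert! (h1.comp_add_const z l).sub (h.hasDerivAt_zeta z hz) using 1
    rw [L.weierstrassP_add_coe z ⟨l, hl⟩, sub_self]
  linear_combination L.eq_of_hasDerivAt_zero this hz hw

lemma exists_sigma_add {l η : ℂ} (hl : l ∈ L.lattice)
    (hη : ∀ z ∉ L.lattice, ζ (z + l) = ζ z + η) :
    ∃ C : ℂ, C ≠ 0 ∧ ∀ z, σ (z + l) = C * cexp (η * z) * σ z := by
  have hw := L.ω₁_div_two_notMem_lattice
  have hd : ∀ z ∉ L.lattice, HasDerivAt (fun z => σ (z + l) * cexp (-(η * z)) / σ z) 0 z := by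
    intro z hz
    have hz' : z + l ∉ L.lattice := by rwa [L.add_mem_iff hl]
    have h1 := (h.hasDerivAt _ hz').comp_add_const z l
    have h2 : HasDerivAt (fun z => cexp (-(η * z))) (cexp (-(η * z)) * -η) z := by
      simpa using ((hasDerivAt_id z).const_mul η).neg.cexp
    convert! (h1.mul h2).div (h.hasDerivAt z hz) (h.ne_zero hz) using 1
    rw [hη z hz]; simp only [Pi.mul_apply]; ring
  have hw' : L.ω₁ / 2 + l ∉ L.lattice := by rwa [L.add_mem_iff hl]
  refine ⟨_, div_ne_zero (mul_ne_zero (h.ne_zero hw') (exp_ne_zero (-(η * (L.ω₁ / 2)))))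
    (h.ne_zero hw), L.eq_of_eq_off_lattice (h.differentiable.continuous.comp (by fun_prop))
    ((by fun_prop : Continuous fun z => _ * cexp (η * z)).mul h.differentiable.continuous)
    fun z hz => ?_⟩
  have := L.eq_of_hasDerivAt_zero hd hz hw
  rw [← this]
  have hz0 := h.ne_zero hz
  rw [div_mul_eq_mul_div, div_mul_cancel₀ _ hz0, mul_assoc, ← exp_add, neg_add_cancel, exp_zero,
    mul_one]

/-- Quasi-periodicity of `σ` with respect to a period that is not twice another period. -/
lemma sigma_add {l η : ℂ} (hl : l ∈ L.lattice) (hl' : l / 2 ∉ L.lattice)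
    (hη : ∀ z ∉ L.lattice, ζ (z + l) = ζ z + η) (z : ℂ) :
    σ (z + l) = -cexp (η * (z + l / 2)) * σ z := by
  obtain ⟨C, -, hC⟩ := h.exists_sigma_add hl hη
  have h1 := hC (-(l / 2))
  rw [show -(l / 2) + l = l / 2 by ring, h.odd] at h1
  have h2 : C * cexp (η * -(l / 2)) = -1 :=
    mul_right_cancel₀ (h.ne_zero hl') (by linear_combination h1)
  have h3 : C = -cexp (η * (l / 2)) := by
    have : cexp (η * -(l / 2)) * cexp (η * (l / 2)) = 1 := by
      rw [← exp_add]; simp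
    linear_combination cexp (η * (l / 2)) * h2 - C * this
  rw [hC, h3, mul_add, exp_add]
  ring

lemma eq_zero_of_mem {l : ℂ} (hl : l ∈ L.lattice) : σ l = 0 := by
  obtain ⟨η, hη⟩ := h.exists_zeta_add hl
  obtain ⟨C, -, hC⟩ := h.exists_sigma_add hl hη
  simpa [h.zero] using hC 0

lemma eq_zero_iff {z : ℂ} : σ z = 0 ↔ z ∈ L.lattice :=
  ⟨fun hz => by_contra fun hz' => h.ne_zero hz' hz, h.eq_zero_of_mem⟩

lemma deriv_ne_zero {l : ℂ} (hl : σ l = 0) : deriv σ l ≠ 0 := by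
  have hl := h.eq_zero_iff.mp hl
  obtain ⟨η, hη⟩ := h.exists_zeta_add hl
  obtain ⟨C, hC0, hC⟩ := h.exists_sigma_add hl hη
  have h1 : HasDerivAt (fun z => σ (z + l)) (deriv σ l) 0 := by
    have : HasDerivAt σ (deriv σ l) (0 + l) := by
      rw [zero_add]; exact (h.differentiable l).hasDerivAt
    exact this.comp_add_const 0 l
  have h2 : HasDerivAt (fun z => C * cexp (η * z) * σ z) C 0 := by
    have h3 : HasDerivAt (fun z => C * cexp (η * z)) (C * (cexp (η * 0) * η)) 0 := by
      simpa using ((hasDerivAt_id (0 : ℂ)).const_mul η).cexp.const_mul C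
    simpa [h.zero] using! h3.mul h.hasDerivAt_zero
  rw [funext hC] at h1
  rw [h1.unique h2]
  exact hC0

end IsSigma

section HalfPeriods

variable (L : PeriodPair)

lemma derivWeierstrassP_eq_zero {w : ℂ} (hw : 2 * w ∈ L.lattice) : L.derivWeierstrassP w = 0 := by
  have h1 := L.derivWeierstrassP_sub_coe w ⟨2 * w, hw⟩
  rw [show w - 2 * w = -w by ring, L.derivWeierstrassP_neg] at h1
  exact CharZero.eq_neg_self_iff.mp h1.symm

lemma hasDerivAt_weierstrassP {z : ℂ} (hz : z ∉ L.lattice) :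
    HasDerivAt L.weierstrassP (L.derivWeierstrassP z) z := by
  rw [← L.deriv_weierstrassP]
  exact (L.analyticOnNhd_weierstrassP z hz).differentiableAt.hasDerivAt

end HalfPeriods

namespace IsSigma

variable {L : PeriodPair} {ζ σ : ℂ → ℂ} (h : L.IsSigma ζ σ)
include h

lemma deriv_deriv {z : ℂ} (hz : z ∉ L.lattice) :
    deriv (deriv σ) z = (ζ z ^ 2 - L.weierstrassP z) * σ z := by
  have heq : deriv σ =ᶠ[𝓝 z] fun z => ζ z * σ z := by
    filter_upwards [L.isOpen_compl_lattice.mem_nhds hz] with w hw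
    exact (h.hasDerivAt w hw).deriv
  rw [heq.deriv_eq, ((h.hasDerivAt_zeta z hz).fun_mul (h.hasDerivAt z hz)).deriv]
  ring

lemma wronskian_eq (e : ℂ) {z : ℂ} (hz : z ∉ L.lattice) :
    deriv σ z ^ 2 - σ z * deriv (deriv σ) z - e * σ z ^ 2
      = σ z ^ 2 * (L.weierstrassP z - e) := by
  rw [h.deriv_deriv hz, (h.hasDerivAt z hz).deriv]
  ring

/-- The values of `℘` at two distinct half-periods differ. -/
lemma weierstrassP_ne {v w : ℂ} (hw₂ : 2 * w ∈ L.lattice) (hw : w ∉ L.lattice)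
    (hv : v ∉ L.lattice) (hvw : v - w ∉ L.lattice) : L.weierstrassP v ≠ L.weierstrassP w := by
  set e := L.weierstrassP w with he
  have hσ := h.differentiable
  have hσ' : Differentiable ℂ (deriv σ) := fun x =>
    (hσ.analyticAt x).deriv.differentiableAt
  have hσ'' : Differentiable ℂ (deriv (deriv σ)) := fun x =>
    (hσ.analyticAt x).deriv.deriv.differentiableAt
  set A : ℂ → ℂ := fun z => deriv σ z ^ 2 - σ z * deriv (deriv σ) z - e * σ z ^ 2 with hA
  have hAd : Differentiable ℂ A := by fun_prop
  have hmem {l z : ℂ} (hl : l ∈ L.lattice) (hz : z ∉ L.lattice) : z + l ∉ L.lattice := by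
    rwa [L.add_mem_iff hl]
  have hA0 : ∀ l ∈ L.lattice, HasDerivAt A 0 (w + l) ∧ A (w + l) = 0 := by
    intro l hl
    have hwl := hmem hl hw
    have he' : L.weierstrassP (w + l) = e := L.weierstrassP_add_coe w ⟨l, hl⟩
    have heq : A =ᶠ[𝓝 (w + l)] fun z => σ z ^ 2 * (L.weierstrassP z - e) := by
      filter_upwards [L.isOpen_compl_lattice.mem_nhds hwl] with z hz
      exact h.wronskian_eq e hz
    refine ⟨HasDerivAt.congr_of_eventuallyEq ?_ heq, ?_⟩
    · convert! ((h.hasDerivAt _ hwl).fun_pow 2).fun_mul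
        ((L.hasDerivAt_weierstrassP hwl).sub_const e) using 1
      rw [he', L.derivWeierstrassP_add_coe w ⟨l, hl⟩, L.derivWeierstrassP_eq_zero hw₂]
      ring
    · rw [heq.eq_of_nhds, he', sub_self, mul_zero]
  have hshift (c : ℂ) : Differentiable ℂ fun z => σ (z + c) := by fun_prop
  have hsimple (c a : ℂ) (ha : σ (a + c) = 0) : deriv (fun z => σ (z + c)) a ≠ 0 := by
    rw [deriv_comp_add_const]; exact h.deriv_ne_zero ha
  obtain ⟨B₁, hB₁, hAB₁⟩ := exists_differentiable_mul_eq hAd (hshift (-w)) (hsimple (-w))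
    fun a ha => by
      have := (hA0 _ (h.eq_zero_iff.mp ha)).2
      rwa [show w + (a + -w) = a by ring] at this
  obtain ⟨B, hB, hB₁B⟩ := exists_differentiable_mul_eq hB₁ (hshift w) (hsimple w)
    fun a ha => by
      have hl : a + -w ∈ L.lattice := by
        have := sub_mem (h.eq_zero_iff.mp ha) hw₂
        rwa [show a + w - 2 * w = a + -w by ring] at this
      have h1 := (hA0 _ hl).1
      rw [show w + (a + -w) = a by ring, funext hAB₁] at h1
      have h2 := (hB₁ a).hasDerivAt.fun_mul ((hshift (-w)) a).hasDerivAt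
      have h3 := h1.unique h2
      rw [h.eq_zero_of_mem hl, mul_zero, zero_add, eq_comm, mul_eq_zero] at h3
      exact h3.resolve_right (hsimple (-w) a (h.eq_zero_of_mem hl))
  have hAB (z : ℂ) : A z = B z * (σ (z + w) * σ (z + -w)) := by rw [hAB₁, hB₁B, mul_assoc]
  have hper : ∀ l ∈ L.lattice, ∀ z, B (z + l) = B z := by
    intro l hl
    obtain ⟨η, hη⟩ := h.exists_zeta_add hl
    obtain ⟨C, hC0, hC⟩ := h.exists_sigma_add hl hη
    have hσc := hσ.continuous
    have hBc := hB.continuous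
    have h1 : ∀ z, σ (z + w) * σ (z + -w) * (B (z + l) - B z) = 0 := by
      refine L.eq_of_eq_off_lattice (by fun_prop) continuous_const fun z hz => ?_
      have e1 : A (z + l) = (C * cexp (η * z)) ^ 2 * A z := by
        simp only [hA]
        rw [h.wronskian_eq e hz, h.wronskian_eq e (hmem hl hz), hC,
          L.weierstrassP_add_coe z ⟨l, hl⟩]
        ring
      have e2 : σ (z + l + w) * σ (z + l + -w)
          = (C * cexp (η * z)) ^ 2 * (σ (z + w) * σ (z + -w)) := by
        have e3 : cexp (η * (z + w)) * cexp (η * (z + -w)) = cexp (η * z) ^ 2 := by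
          rw [sq, ← exp_add, ← exp_add]; congr 1; ring
        rw [add_right_comm z l w, add_right_comm z l (-w), hC, hC]
        linear_combination C ^ 2 * σ (z + w) * σ (z + -w) * e3
      rw [hAB, hAB, e2] at e1
      have : (C * cexp (η * z)) ^ 2 ≠ 0 := pow_ne_zero 2 (mul_ne_zero hC0 (exp_ne_zero _))
      exact mul_left_cancel₀ this (by linear_combination e1)
    have h2 : ∀ z, B (z + w + l) - B (z + w) = 0 := by
      refine L.eq_of_eq_off_lattice (by fun_prop) continuous_const fun z hz => ?_
      have e1 := h1 (z + w)
      have e2 : σ (z + w + w) ≠ 0 := by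
        rw [show z + w + w = z + 2 * w by ring]; exact h.ne_zero (hmem hw₂ hz)
      rw [add_neg_cancel_right] at e1
      exact (mul_eq_zero.mp e1).resolve_left (mul_ne_zero e2 (h.ne_zero hz))
    intro z
    have := h2 (z - w)
    rwa [sub_add_cancel, sub_eq_zero] at this
  have hconst : B v = B 0 := L.entire_const_of_norm_le_periodic hB hB.continuous.norm
    (fun z => by rw [hper _ L.ω₁_mem_lattice]) (fun z => by rw [hper _ L.ω₂_mem_lattice])
    (fun _ => le_rfl) v 0
  have hB0 : B 0 ≠ 0 := by
    intro h0
    have := hAB 0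
    rw [h0, zero_mul] at this
    simp [hA, h.zero, h.hasDerivAt_zero.deriv] at this
  intro hve
  have hAv := hAB v
  simp only [hA] at hAv
  rw [h.wronskian_eq e hv, hve, sub_self, mul_zero, hconst, eq_comm] at hAv
  have hvw' : v + w ∉ L.lattice := by
    rw [show v + w = v - w + 2 * w by ring]; exact hmem hw₂ hvw
  exact mul_ne_zero hB0 (mul_ne_zero (h.ne_zero hvw') (h.ne_zero (sub_eq_add_neg v w ▸ hvw))) hAv

/-- The invariant `g₂` in terms of the values of `℘` at the half-periods. -/
lemma g₂_eq : L.g₂ = -4 * (L.weierstrassP (L.ω₁ / 2) * L.weierstrassP (L.ω₂ / 2)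
    + L.weierstrassP (L.ω₁ / 2) * L.weierstrassP ((L.ω₁ + L.ω₂) / 2)
    + L.weierstrassP (L.ω₂ / 2) * L.weierstrassP ((L.ω₁ + L.ω₂) / 2)) := by
  have n₁ := L.ω₁_div_two_notMem_lattice
  have n₂ := L.ω₂_div_two_notMem_lattice
  have n₃ : (L.ω₁ + L.ω₂) / 2 ∉ L.lattice := by
    have hq := (L.mul_ω₁_add_mul_ω₂_mem_lattice (α := 1 / 2) (β := 1 / 2)).not.mpr (by norm_num)
    rwa [show (L.ω₁ + L.ω₂) / 2 = ((1 / 2 : ℚ) : ℂ) * L.ω₁ + ((1 / 2 : ℚ) : ℂ) * L.ω₂ by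
      push_cast; ring]
  have t₁ : 2 * (L.ω₁ / 2) ∈ L.lattice := by
    rw [mul_div_cancel₀ _ two_ne_zero]; exact L.ω₁_mem_lattice
  have t₂ : 2 * (L.ω₂ / 2) ∈ L.lattice := by
    rw [mul_div_cancel₀ _ two_ne_zero]; exact L.ω₂_mem_lattice
  have t₃ : 2 * ((L.ω₁ + L.ω₂) / 2) ∈ L.lattice := by
    rw [mul_div_cancel₀ _ two_ne_zero]; exact add_mem L.ω₁_mem_lattice L.ω₂_mem_lattice
  have h₁₂ := h.weierstrassP_ne t₁ n₁ n₂ (by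
    rw [show L.ω₂ / 2 - L.ω₁ / 2 = (L.ω₁ + L.ω₂) / 2 - L.ω₁ by ring]
    exact fun hm => n₃ (by simpa using add_mem hm L.ω₁_mem_lattice))
  have h₁₃ := h.weierstrassP_ne t₁ n₁ n₃ (by
    rwa [show (L.ω₁ + L.ω₂) / 2 - L.ω₁ / 2 = L.ω₂ / 2 by ring])
  have h₂₃ := h.weierstrassP_ne t₂ n₂ n₃ (by
    rwa [show (L.ω₁ + L.ω₂) / 2 - L.ω₂ / 2 = L.ω₁ / 2 by ring])
  have r₁ := L.derivWeierstrassP_sq _ n₁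
  have r₂ := L.derivWeierstrassP_sq _ n₂
  have r₃ := L.derivWeierstrassP_sq _ n₃
  rw [L.derivWeierstrassP_eq_zero t₁] at r₁
  rw [L.derivWeierstrassP_eq_zero t₂] at r₂
  rw [L.derivWeierstrassP_eq_zero t₃] at r₃
  generalize L.weierstrassP (L.ω₁ / 2) = a at *
  generalize L.weierstrassP (L.ω₂ / 2) = b at *
  generalize L.weierstrassP ((L.ω₁ + L.ω₂) / 2) = c at *
  have s₁ : L.g₂ = 4 * (a ^ 2 + a * b + b ^ 2) :=
    mul_left_cancel₀ (sub_ne_zero.mpr h₁₂) (by linear_combination r₂ - r₁)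
  have s₂ : L.g₂ = 4 * (a ^ 2 + a * c + c ^ 2) :=
    mul_left_cancel₀ (sub_ne_zero.mpr h₁₃) (by linear_combination r₃ - r₁)
  have s₃ : a + b + c = 0 :=
    mul_left_cancel₀ (sub_ne_zero.mpr h₂₃) (by linear_combination (s₁ - s₂) / 4)
  linear_combination s₁ + 4 * (a + b) * s₃

end IsSigma

/-- The pair of periods `1, τ`. -/
def ofUpperHalfPlane (τ : ℂ) (hτ : 0 < τ.im) : PeriodPair where
  ω₁ := 1
  ω₂ := τ
  indep := by
    refine LinearIndependent.pair_iff.mpr fun s t hst => ?_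
    have him := congrArg Complex.im hst
    have hre := congrArg Complex.re hst
    simp only [real_smul, mul_one, add_im, ofReal_im, im_ofReal_mul, zero_add, zero_im,
      mul_eq_zero] at him
    obtain rfl := him.resolve_right hτ.ne'
    simpa using hre

variable {τ : ℂ} (hτ : 0 < τ.im)

lemma mem_lattice_ofUpperHalfPlane {z : ℂ} :
    z ∈ (ofUpperHalfPlane τ hτ).lattice ↔ InLattice τ z := by
  simp only [mem_lattice, InLattice, ofUpperHalfPlane, mul_one, eq_comm]

lemma weierstrassP_ofUpperHalfPlane (z : ℂ) :
    (ofUpperHalfPlane τ hτ).weierstrassP z = wp τ z := by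
  set L := ofUpperHalfPlane τ hτ with hL
  rw [← L.weierstrassPExcept_add 0 z, wp, add_comm, weierstrassPExcept,
    ← L.latticeEquivProd.symm.toEquiv.tsum_eq]
  have hcoe (x : ℤ × ℤ) : ((L.latticeEquivProd.symm x : L.lattice) : ℂ) = x.1 + x.2 * τ := by
    rw [L.latticeEquiv_symm_apply]; simp [hL, ofUpperHalfPlane]
  congr 1
  · simp
  · symm
    refine (tsum_subtype {w : ℤ × ℤ | w ≠ 0} fun w => (z - ((w.1 : ℂ) + (w.2 : ℂ) * τ))⁻¹ ^ 2
      - ((w.1 : ℂ) + (w.2 : ℂ) * τ)⁻¹ ^ 2).trans (tsum_congr fun x => ?_)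
    by_cases hx : x = 0
    · simp [hx]
    · have : ((L.latticeEquivProd.symm x : L.lattice) : ℂ) ≠ 0 := by simpa using hx
      simp only [LinearEquiv.coe_toEquiv, ZeroMemClass.coe_zero]
      rw [if_neg this, hcoe]
      simp [hx]

lemma isSigma_ofUpperHalfPlane {zeta sigma : ℂ → ℂ → ℂ} (hzeta : IsWeierstrassZeta zeta)
    (hsigma : IsWeierstrassSigma zeta sigma) :
    (ofUpperHalfPlane τ hτ).IsSigma (zeta τ) (sigma τ) where
  hasDerivAt_zeta z hz := by
    rw [weierstrassP_ofUpperHalfPlane]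
    exact (hzeta τ hτ).2.1 z ((mem_lattice_ofUpperHalfPlane hτ).not.mp hz)
  odd := (hsigma τ hτ).1
  differentiable := (hsigma τ hτ).2.1
  hasDerivAt z hz := (hsigma τ hτ).2.2.1 z ((mem_lattice_ofUpperHalfPlane hτ).not.mp hz)
  tendsto := (hsigma τ hτ).2.2.2

lemma g₂_ofUpperHalfPlane {ζ σ : ℂ → ℂ} (h : (ofUpperHalfPlane τ hτ).IsSigma ζ σ) :
    (ofUpperHalfPlane τ hτ).g₂ = g2 τ := by
  rw [h.g₂_eq]
  simp only [weierstrassP_ofUpperHalfPlane]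
  rfl

end PeriodPair

namespace PeriodPair

variable {τ : ℂ} (hτ : 0 < τ.im)

/-- An entire function whose modulus is `1`-periodic and multiplied by `|exp (2πik(z + τ/2))|`,
`k ≥ 0`, under translation by `τ`, is constant. -/
lemma eq_of_norm_add_tau_eq {τ : ℂ} (hτ : 0 < τ.im) {f : ℂ → ℂ} (hf : Differentiable ℂ f)
    (h₁ : ∀ z, ‖f (z + 1)‖ = ‖f z‖) {k : ℝ} (hk : 0 ≤ k)
    (h₂ : ∀ z, ‖f (z + τ)‖ = ‖cexp (2 * π * I * k * (z + τ / 2))‖ * ‖f z‖) (z w : ℂ) :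
    f z = f w := by
  have hfc := hf.continuous
  refine (ofUpperHalfPlane τ hτ).entire_const_of_norm_le_periodic
    (φ := fun z => ‖f z‖ * Real.exp (π * k * z.im ^ 2 / τ.im)) hf (by fun_prop)
    (fun z => ?_) (fun z => ?_) (fun z => ?_) z w
  · simp [ofUpperHalfPlane, h₁]
  · change ‖f (z + τ)‖ * Real.exp (π * k * (z + τ).im ^ 2 / τ.im) = _
    rw [h₂, norm_exp, mul_right_comm, ← Real.exp_add, mul_comm]
    congr 2
    have : (2 * π * I * k * (z + τ / 2)).re = -(2 * π * k * (z.im + τ.im / 2)) := by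
      have : (2 * π * I * k * (z + τ / 2)) = ((2 * π * k : ℝ) : ℂ) * (I * (z + τ / 2)) := by
        push_cast; ring
      rw [this, re_ofReal_mul, I_mul_re]
      simp only [add_im, div_ofNat_im]
      ring
    rw [this, add_im]
    field_simp
    ring
  · exact le_mul_of_one_le_right (norm_nonneg _) (Real.one_le_exp (by positivity))

lemma oddTheta_eq_zero_of_mem {l : ℂ} (hl : l ∈ (ofUpperHalfPlane τ hτ).lattice) :
    oddTheta 0 l τ = 0 := by
  let S : AddSubgroup ℂ :=
    { carrier := {l | ∀ z, oddTheta 0 (z + l) τ = 0 ↔ oddTheta 0 z τ = 0}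
      zero_mem' := fun z => by rw [add_zero]
      add_mem' := fun {a b} ha hb z => by rw [← add_assoc, hb, ha]
      neg_mem' := fun {a} ha z => by rw [← ha, neg_add_cancel_right] }
  have hle : (ofUpperHalfPlane τ hτ).lattice ≤ S.toIntSubmodule := by
    refine Submodule.span_le.mpr (Set.insert_subset ?_ (Set.singleton_subset_iff.mpr ?_))
    · exact fun z => by simp [ofUpperHalfPlane, oddTheta_add_one]
    · exact fun z => by simp [ofUpperHalfPlane, oddTheta_add_tau]
  have := hle hl 0
  rw [zero_add] at this
  exact this.mpr (oddTheta_zero_of_even Even.zero τ)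

variable {ζ σ : ℂ → ℂ} {η : ℂ}

/-- The odd theta function is proportional to `σ(z) exp(-η z² / 2)`. -/
lemma IsSigma.exists_oddTheta_mul_exp_eq (h : (ofUpperHalfPlane τ hτ).IsSigma ζ σ)
    (hη : ∀ z ∉ (ofUpperHalfPlane τ hτ).lattice, ζ (z + 1) = ζ z + η) :
    ∃ a : ℂ, a ≠ 0 ∧ ∀ z, oddTheta 0 z τ * cexp (η * z ^ 2 / 2) = a * σ z := by
  set L := ofUpperHalfPlane τ hτ with hL
  have m₁ : 1 ∈ L.lattice := L.ω₁_mem_lattice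
  have m₂ : τ ∈ L.lattice := L.ω₂_mem_lattice
  obtain ⟨η₂, hη₂⟩ := h.exists_zeta_add m₂
  have s₁ := h.sigma_add m₁ L.ω₁_div_two_notMem_lattice hη
  have s₂ := h.sigma_add m₂ L.ω₂_div_two_notMem_lattice hη₂
  have hθ := differentiable_oddTheta 0 hτ
  obtain ⟨f, hf, hfσ⟩ := exists_differentiable_mul_eq
    (g := fun z => oddTheta 0 z τ * cexp (η * z ^ 2 / 2)) (by fun_prop) h.differentiable
    (fun a ha => h.deriv_ne_zero ha)
    (fun a ha => by simp [oddTheta_eq_zero_of_mem hτ (h.eq_zero_iff.mp ha)])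
  have hfc := hf.continuous
  set c : ℂ := η * τ - 2 * π * I - η₂ with hc
  have f₁ : ∀ z, f (z + 1) = f z := by
    refine L.eq_of_eq_off_lattice (by fun_prop) hfc fun z hz => ?_
    have e1 := hfσ (z + 1)
    simp only [oddTheta_add_one] at e1
    rw [s₁, show η * (z + 1) ^ 2 / 2 = η * z ^ 2 / 2 + η * (z + 1 / 2) by ring, exp_add] at e1
    refine mul_right_cancel₀ (mul_ne_zero (h.ne_zero hz) (exp_ne_zero (η * (z + 1 / 2)))) ?_
    linear_combination cexp (η * (z + 1 / 2)) * hfσ z + e1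
  have f₂ : ∀ z, f (z + τ) = cexp (c * (z + τ / 2)) * f z := by
    refine L.eq_of_eq_off_lattice (by fun_prop) (by fun_prop) fun z hz => ?_
    have e1 := hfσ (z + τ)
    simp only [oddTheta_add_tau] at e1
    have e2 : cexp (-(2 * π * I) * (z + τ / 2)) * cexp (η * (z + τ) ^ 2 / 2)
        = cexp (c * (z + τ / 2)) * cexp (η₂ * (z + τ / 2)) * cexp (η * z ^ 2 / 2) := by
      rw [← exp_add, ← exp_add, ← exp_add, hc]; congr 1; ring
    rw [s₂] at e1
    refine mul_right_cancel₀ (mul_ne_zero (h.ne_zero hz) (exp_ne_zero (η₂ * (z + τ / 2)))) ?_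
    linear_combination cexp (c * (z + τ / 2)) * cexp (η₂ * (z + τ / 2)) * hfσ z + e1
      + oddTheta 0 z τ * e2
  obtain ⟨z₀, hz₀⟩ := exists_oddTheta_ne_zero hτ
  have hfz₀ : f z₀ ≠ 0 := by
    intro h0
    have := hfσ z₀
    rw [h0, zero_mul] at this
    exact mul_ne_zero hz₀ (exp_ne_zero _) this
  obtain ⟨k, hk⟩ : ∃ k : ℤ, c = k * (2 * π * I) := by
    rw [← exp_eq_one_iff]
    have e1 := f₂ (z₀ + 1)
    rw [add_right_comm, f₁, f₁, f₂,
      show c * (z₀ + 1 + τ / 2) = c * (z₀ + τ / 2) + c by ring, exp_add] at e1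
    refine mul_left_cancel₀ (mul_ne_zero (exp_ne_zero (c * (z₀ + τ / 2))) hfz₀) ?_
    linear_combination -e1
  have hk0 : 0 ≤ k := by
    by_contra! hk0
    have hσ := h.differentiable
    have hs : ∀ z w, σ z * cexp (-(η * z ^ 2 / 2)) = σ w * cexp (-(η * w ^ 2 / 2)) := by
      refine eq_of_norm_add_tau_eq hτ (k := ((-(k + 1) : ℤ) : ℝ)) (by fun_prop) (fun z => ?_)
        (by exact_mod_cast (by lia : 0 ≤ -(k + 1))) (fun z => ?_)
      · rw [s₁, ← norm_neg]
        congr 1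
        rw [show -(η * (z + 1) ^ 2 / 2) = -(η * z ^ 2 / 2) + -(η * (z + 1 / 2)) by ring, exp_add]
        have := exp_neg (η * (z + 1 / 2))
        rw [this]
        field_simp [exp_ne_zero]
      · rw [s₂, ← norm_mul, ← norm_neg]
        congr 1
        have e2 : cexp (η₂ * (z + τ / 2)) * cexp (-(η * (z + τ) ^ 2 / 2))
            = cexp (2 * π * I * ((-(k + 1) : ℤ) : ℝ) * (z + τ / 2)) * cexp (-(η * z ^ 2 / 2)) := by
          rw [← exp_add, ← exp_add]
          congr 1
          push_cast
          linear_combination (z + τ / 2) * (hc - hk)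
        linear_combination σ z * e2
    have := hs z₀ 0
    rw [h.zero, zero_mul] at this
    have hσz₀ := (mul_eq_zero.mp this).resolve_right (exp_ne_zero _)
    exact hz₀ (oddTheta_eq_zero_of_mem hτ (h.eq_zero_iff.mp hσz₀))
  have hconst := eq_of_norm_add_tau_eq hτ hf (k := (k : ℝ)) (fun z => by rw [f₁])
    (by exact_mod_cast hk0) (fun z => by
      rw [f₂, norm_mul, hk]; congr 3; push_cast; ring)
  exact ⟨f z₀, hfz₀, fun z => by rw [hfσ, hconst z z₀]⟩

/-- The Weierstrass sigma function in terms of the odd theta function. -/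
lemma IsSigma.oddTheta_mul_exp_eq (h : (ofUpperHalfPlane τ hτ).IsSigma ζ σ)
    (hη : ∀ z ∉ (ofUpperHalfPlane τ hτ).lattice, ζ (z + 1) = ζ z + η) :
    oddTheta 1 0 τ ≠ 0 ∧
      ∀ z, oddTheta 0 z τ * cexp (η * z ^ 2 / 2) = oddTheta 1 0 τ * σ z := by
  obtain ⟨a, ha, haσ⟩ := h.exists_oddTheta_mul_exp_eq hτ hη
  have e1 : HasDerivAt (fun z => oddTheta 0 z τ * cexp (η * z ^ 2 / 2)) (oddTheta 1 0 τ) 0 := by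
    have hd : HasDerivAt (fun z : ℂ => cexp (η * z ^ 2 / 2)) 0 0 := by
      convert! ((((hasDerivAt_id (0 : ℂ)).fun_pow 2).const_mul η).div_const 2).cexp using 1
      simp
    convert! (hasDerivAt_oddTheta_fst 0 0 hτ).fun_mul hd using 1
    simp
  have e2 := h.hasDerivAt_zero.const_mul a
  rw [mul_one, ← funext haσ] at e2
  rw [e1.unique e2]
  exact ⟨ha, haσ⟩

end PeriodPair

namespace PeriodPair.IsSigma

variable {τ : ℂ} {hτ : 0 < τ.im} {ζ σ : ℂ → ℂ} {η : ℂ}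
  (h : (ofUpperHalfPlane τ hτ).IsSigma ζ σ)
  (hη : ∀ z ∉ (ofUpperHalfPlane τ hτ).lattice, ζ (z + 1) = ζ z + η)
include h hη

lemma oddTheta_one_eq {z : ℂ} (hz : z ∉ (ofUpperHalfPlane τ hτ).lattice) :
    oddTheta 1 z τ = (ζ z - η * z) * oddTheta 0 z τ := by
  have e1 := (h.oddTheta_mul_exp_eq hτ hη).2
  have e2 := (h.hasDerivAt z hz).const_mul (oddTheta 1 0 τ)
  rw [← funext e1] at e2
  have hd : HasDerivAt (fun z : ℂ => cexp (η * z ^ 2 / 2)) (cexp (η * z ^ 2 / 2) * (η * z)) z := by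
    convert! ((((hasDerivAt_id z).fun_pow 2).const_mul η).div_const 2).cexp using 1
    simp
    ring
  have e3 := e2.unique ((hasDerivAt_oddTheta_fst 0 z hτ).fun_mul hd)
  refine mul_left_cancel₀ (exp_ne_zero (η * z ^ 2 / 2)) ?_
  linear_combination -e3 - ζ z * e1 z

lemma oddTheta_two_eq {z : ℂ} (hz : z ∉ (ofUpperHalfPlane τ hτ).lattice) :
    oddTheta 2 z τ = ((ζ z - η * z) ^ 2 - (ofUpperHalfPlane τ hτ).weierstrassP z - η)
      * oddTheta 0 z τ := by
  have heq : (fun z => oddTheta 1 z τ) =ᶠ[𝓝 z] fun z => (ζ z - η * z) * oddTheta 0 z τ := by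
    filter_upwards [(ofUpperHalfPlane τ hτ).isOpen_compl_lattice.mem_nhds hz] with w hw
    exact h.oddTheta_one_eq hη hw
  have e1 := (((h.hasDerivAt_zeta z hz).fun_sub ((hasDerivAt_id z).const_mul η)).fun_mul
    (hasDerivAt_oddTheta_fst 0 z hτ)).congr_of_eventuallyEq heq
  rw [(hasDerivAt_oddTheta_fst 1 z hτ).unique e1, h.oddTheta_one_eq hη hz]
  simp only [id]
  ring

/-- The relation `℘ = -(log σ)''` near the origin, cleared of denominators. -/
lemma oddTheta_relation_eventuallyEq :
    (fun z => z ^ 2 * (oddTheta 1 z τ * oddTheta 1 z τ - oddTheta 0 z τ * oddTheta 2 z τ))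
      =ᶠ[𝓝 0] fun z => (1 + z ^ 2 * (ofUpperHalfPlane τ hτ).weierstrassPExcept 0 z + η * z ^ 2)
        * (oddTheta 0 z τ * oddTheta 0 z τ) := by
  set L := ofUpperHalfPlane τ hτ
  filter_upwards [L.compl_lattice_sdiff_singleton_mem_nhds 0] with z hz
  by_cases hz0 : z = 0
  · simp [hz0, oddTheta_zero_of_even Even.zero]
  replace hz : z ∉ L.lattice := by simp_all
  have e1 := L.weierstrassPExcept_def 0 z
  simp only [ZeroMemClass.coe_zero, sub_zero, zero_pow two_ne_zero, div_zero] at e1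
  rw [e1, h.oddTheta_one_eq hη hz, h.oddTheta_two_eq hη hz]
  field_simp
  ring

attribute [local fun_prop] AnalyticAt.contDiffAt in
lemma oddTheta_three_zero : oddTheta 3 0 τ = -3 * η * oddTheta 1 0 τ := by
  have hθ (k : ℕ) : AnalyticAt ℂ (fun z => oddTheta k z τ) 0 :=
    (differentiable_oddTheta k hτ).analyticAt 0
  have key := (h.oddTheta_relation_eventuallyEq hη).iteratedDeriv_eq 4
  simp (discharger := fun_prop) only [iteratedDeriv_fun_add, iteratedDeriv_fun_sub,
    iteratedDeriv_fun_mul, iteratedDeriv_const, iteratedDeriv_fun_pow_zero,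
    iteratedDeriv_weierstrassPExcept_self, iteratedDeriv_oddTheta _ _ hτ] at key
  simp [Finset.sum_range_succ, oddTheta_zero_of_even Even.zero, oddTheta_zero_of_even even_two,
    oddTheta_zero_of_even (by decide : Even 4), show Nat.choose 4 2 = 6 by rfl] at key
  refine mul_left_cancel₀ (h.oddTheta_mul_exp_eq hτ hη).1 ?_
  linear_combination -key / 8

attribute [local fun_prop] AnalyticAt.contDiffAt in
lemma oddTheta_five_zero :
    oddTheta 5 0 τ = (15 * η ^ 2 - (ofUpperHalfPlane τ hτ).g₂ / 2) * oddTheta 1 0 τ := by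
  have hθ (k : ℕ) : AnalyticAt ℂ (fun z => oddTheta k z τ) 0 :=
    (differentiable_oddTheta k hτ).analyticAt 0
  have key := (h.oddTheta_relation_eventuallyEq hη).iteratedDeriv_eq 6
  simp (discharger := fun_prop) only [iteratedDeriv_fun_add, iteratedDeriv_fun_sub,
    iteratedDeriv_fun_mul, iteratedDeriv_const, iteratedDeriv_fun_pow_zero,
    iteratedDeriv_weierstrassPExcept_self, iteratedDeriv_oddTheta _ _ hτ] at key
  simp [Finset.sum_range_succ, oddTheta_zero_of_even Even.zero, oddTheta_zero_of_even even_two,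
    oddTheta_zero_of_even (by decide : Even 4), oddTheta_zero_of_even (by decide : Even 6),
    show Nat.choose 4 2 = 6 by rfl, show Nat.choose 6 2 = 15 by rfl,
    show Nat.choose 6 4 = 15 by rfl, show Nat.choose 6 3 = 20 by rfl,
    h.oddTheta_three_zero hη] at key
  refine mul_left_cancel₀ (h.oddTheta_mul_exp_eq hτ hη).1 ?_
  rw [g₂]
  linear_combination -key / 72

end PeriodPair.IsSigma

lemma IsEta1.zeta_add_one {zeta : ℂ → ℂ → ℂ} {eta1 : ℂ → ℂ} (h : IsEta1 zeta eta1) {τ : ℂ}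
    (hτ : 0 < τ.im) :
    ∀ z ∉ (PeriodPair.ofUpperHalfPlane τ hτ).lattice, zeta τ (z + 1) = zeta τ z + eta1 τ :=
  fun z hz => by rw [h τ hτ z ((PeriodPair.mem_lattice_ofUpperHalfPlane hτ).not.mp hz)]; ring

/-- The Weierstrass sigma function, with `η₁` expressed through theta constants. -/
lemma sigma_eq_oddTheta {zeta sigma : ℂ → ℂ → ℂ} {eta1 : ℂ → ℂ}
    (hzeta : IsWeierstrassZeta zeta) (hsigma : IsWeierstrassSigma zeta sigma)
    (heta1 : IsEta1 zeta eta1) {τ : ℂ} (hτ : 0 < τ.im) (z : ℂ) :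
    sigma τ z = oddTheta 0 z τ * cexp (-(oddTheta 3 0 τ / oddTheta 1 0 τ) * z ^ 2 / 6)
      / oddTheta 1 0 τ := by
  have h := PeriodPair.isSigma_ofUpperHalfPlane hτ hzeta hsigma
  have hη := heta1.zeta_add_one hτ
  obtain ⟨h1, h2⟩ := h.oddTheta_mul_exp_eq hτ hη
  rw [h.oddTheta_three_zero hη, mul_div_cancel_right₀ _ h1, eq_div_iff h1, mul_comm, ← h2]
  congr 2
  ring

/-- Lemma 2.3 (i): the `τ`-derivative of `log σ(z|τ)`. -/
theorem tau_deriv_log_sigma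
    (zeta sigma : ℂ → ℂ → ℂ) (eta1 : ℂ → ℂ)
    (hzeta : IsWeierstrassZeta zeta) (hsigma : IsWeierstrassSigma zeta sigma)
    (heta1 : IsEta1 zeta eta1) :
    ∀ τ : ℂ, 0 < τ.im → ∀ z : ℂ, ¬ InLattice τ z →
    HasDerivAt (fun t => sigma t z)
      (((Complex.I / (4 * (Real.pi : ℂ))) *
        (wp τ z - (zeta τ z) ^ 2 + 2 * eta1 τ * (z * zeta τ z - 1)
          - (1 / 12) * g2 τ * z ^ 2)) * sigma τ z) τ := by
  intro τ hτ z hz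
  have h := PeriodPair.isSigma_ofUpperHalfPlane hτ hzeta hsigma
  have hη := heta1.zeta_add_one hτ
  have h1 := (h.oddTheta_mul_exp_eq hτ hη).1
  have heq : (fun t => sigma t z) =ᶠ[𝓝 τ] fun t => oddTheta 0 z t
      * cexp (-(oddTheta 3 0 t / oddTheta 1 0 t) * z ^ 2 / 6) / oddTheta 1 0 t := by
    filter_upwards [(isOpen_lt continuous_const continuous_im).mem_nhds hτ] with t ht
    exact sigma_eq_oddTheta hzeta hsigma heta1 ht z
  have d (k : ℕ) (z : ℂ) := hasDerivAt_oddTheta_snd k z hτ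
  refine HasDerivAt.congr_of_eventuallyEq ?_ heq
  convert! ((d 0 z).fun_mul ((((d 3 0).fun_div (d 1 0) h1).fun_neg.mul_const
    (z ^ 2)).div_const 6).cexp).fun_div (d 1 0) h1 using 1
  have hz' := (PeriodPair.mem_lattice_ofUpperHalfPlane hτ).not.mpr hz
  rw [sigma_eq_oddTheta hzeta hsigma heta1 hτ z, zero_add, h.oddTheta_two_eq hη hz',
    h.oddTheta_five_zero hη, h.oddTheta_three_zero hη, PeriodPair.g₂_ofUpperHalfPlane hτ h,
    PeriodPair.weierstrassP_ofUpperHalfPlane]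
  have hI : I / (4 * (π : ℂ)) = -1 / (4 * π * I) := by
    have := Real.pi_ne_zero
    field_simp
    simp
  rw [hI]
  have hπI : 4 * π * I ≠ 0 := by simp [Real.pi_ne_zero]
  generalize 4 * π * I = κ at *
  field_simp
  ring
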